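/- Let a, b satisfy either a, b \in (-1,\infty) with ab > 0, or a, b \in \mathbb{C} \setminus \{0\} with b = \overline{a}; let c be a positive real number with c > \mathrm{Re}(a+b), and let \alpha \in \mathbb{C} with |\alpha| < 1. If |\alpha| \cdot \frac{\Gamma(c)\Gamma(c-a-b)}{\Gamma(c-a)\Gamma(c-b)} \leq 1 (this quantity being a positive real number), then the Taylor coefficients b_{n+1} = \frac{\alpha}{2} \frac{(a)_n (b)_n}{(c)_n n! (n+1)} of g_3(z) = (\alpha/2) \int_0^z F(a,b;c;t)\,dt satisfy \sum_{n=1}^{\infty} n |b_n| \leq 1/2; consequently f_3(z) = z + \overline{(\alpha/2) \int_0^z F(a,b;c;t)\,dt} is uniformly starlike in \mathbb{D}. -/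

import Mathlib

open Complex Metric ComplexConjugate

noncomputable section

/-- The Pochhammer symbol `(x)ₙ = x(x+1)⋯(x+n-1)` for `x : ℂ`. -/
def poch (x : ℂ) (n : ℕ) : ℂ := (ascPochhammer ℂ n).eval x

/-- The analytic condition (due to Kanas–Ponnusamy–Sairam) characterizing uniform
starlikeness used in the paper, taken here as the formal definition of
"`h + conj g` is uniformly starlike in `𝔻`". -/
def UniformlyStarlikeOnDisk (h g : ℂ → ℂ) : Prop :=
  (h 0 + conj (g 0) = 0) ∧
  (∀ z ∈ ball (0:ℂ) 1, ‖deriv g z‖ < ‖deriv h z‖) ∧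
  (∀ z ∈ ball (0:ℂ) 1, ∀ ζ ∈ ball (0:ℂ) 1, z ≠ ζ →
    0 ≤ (((h z + conj (g z)) - (h ζ + conj (g ζ)))
        / ((z - ζ) * deriv h z - conj (z - ζ) * conj (deriv g z))).re) ∧
  (∀ z ∈ ball (0:ℂ) 1, z ≠ 0 →
    0 < ((h z + conj (g z))
        / (z * deriv h z - conj z * conj (deriv g z))).re)

/-- The Taylor coefficient `b_{n+1} = (α/2) (a)ₙ(b)ₙ/((c)ₙ n! (n+1))` of
`g₃(z) = (α/2) ∫₀ᶻ F(a,b;c;t) dt`. -/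
def bc3 (a b c α : ℂ) (n : ℕ) : ℂ :=
  α / 2 * (poch a n * poch b n) / (poch c n * (Nat.factorial n : ℂ) * (n + 1 : ℂ))

/-- The primitive `∫₀ᶻ F(a,b;c;t) dt = ∑ (a)ₙ(b)ₙ/((c)ₙ n! (n+1)) z^{n+1}`. -/
def hypFPrim (a b c z : ℂ) : ℂ :=
  ∑' n : ℕ, poch a n * poch b n
    / (poch c n * (Nat.factorial n : ℂ) * (n + 1 : ℂ)) * z ^ (n + 1)

/-!
Write `uₙ(c) = (a)ₙ(b)ₙ/((c)ₙ n!)` and `S_N(c) = ∑_{n<N} uₙ(c)`. Telescoping gives the contiguous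
relation
`(c-a)(c-b) S_N(c+1) = c(c-a-b) S_N(c) + c N u_N(c)`,
so for nonnegative coefficients `S_N(c) ≤ (c-a)(c-b)/(c(c-a-b)) S_N(c+1)`. Iterating `m` times and
letting `m → ∞`, the accumulated product tends to `Γ(c)Γ(c-a-b)/(Γ(c-a)Γ(c-b))` by Euler's limit
formula while `S_N(c+m) → 1`; this is the upper-bound half of Gauss's summation theorem, and it
yields `∑ n|bₙ| ≤ 1/2`.

That bound makes `|g'| ≤ 1/2` on the disk, so the numerator and the denominator of the quotient
defining uniform starlikeness both lie within `|z-ζ|/2` of `z-ζ`. A disk about `w` of radius less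
than `|w|/√2` subtends a half-angle less than `π/4` at the origin, so the quotient has positive
real part.
-/

section HypergeometricCoefficients

open Finset

variable {𝕂 : Type*} [Field 𝕂]

lemma ordinaryHypergeometricCoefficient_zero (a b c : 𝕂) :
    ordinaryHypergeometricCoefficient a b c 0 = 1 := by
  simp [ordinaryHypergeometricCoefficient]

lemma ordinaryHypergeometricCoefficient_succ (a b c : 𝕂) (n : ℕ) :
    ordinaryHypergeometricCoefficient a b c (n + 1) =
      ordinaryHypergeometricCoefficient a b c n *
        ((a + n) * (b + n) * (n + 1 : 𝕂)⁻¹ * (c + n)⁻¹) := by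
  simp only [ordinaryHypergeometricCoefficient, ascPochhammer_succ_eval, Nat.factorial_succ,
    Nat.cast_mul, Nat.cast_succ, mul_inv]
  ring

lemma ascPochhammer_eval_add_one_mul {R : Type*} [CommSemiring R] (x : R) (n : ℕ) :
    x * (ascPochhammer R n).eval (x + 1) = (ascPochhammer R n).eval x * (x + n) := by
  rw [← ascPochhammer_succ_eval, ascPochhammer_succ_left]
  simp [Polynomial.eval_comp]

lemma ordinaryHypergeometricCoefficient_add_one (a b : 𝕂) {c : 𝕂} (hc : c ≠ 0) (n : ℕ) :
    ordinaryHypergeometricCoefficient a b (c + 1) n =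
      ordinaryHypergeometricCoefficient a b c n * (c / (c + n)) := by
  have hpoch : (ascPochhammer 𝕂 n).eval (c + 1) = (ascPochhammer 𝕂 n).eval c * ((c + n) / c) := by
    rw [mul_div_assoc', ← ascPochhammer_eval_add_one_mul, mul_div_cancel_left₀ _ hc]
  simp only [ordinaryHypergeometricCoefficient, hpoch, mul_inv, inv_div]
  ring

lemma sum_ordinaryHypergeometricCoefficient_contiguous [CharZero 𝕂] (a b : 𝕂) {c : 𝕂}
    (hc : ∀ n : ℕ, c + n ≠ 0) (N : ℕ) :
    (c - a) * (c - b) * ∑ n ∈ range N, ordinaryHypergeometricCoefficient a b (c + 1) n =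
      c * (c - a - b) * ∑ n ∈ range N, ordinaryHypergeometricCoefficient a b c n +
        c * (N * ordinaryHypergeometricCoefficient a b c N) := by
  induction N with
  | zero => simp
  | succ n ih =>
    have hc0 : c ≠ 0 := by simpa using hc 0
    have hcn := hc n
    rw [sum_range_succ, sum_range_succ, mul_add, ih,
      ordinaryHypergeometricCoefficient_add_one a b hc0,
      ordinaryHypergeometricCoefficient_succ]
    generalize ordinaryHypergeometricCoefficient a b c n = u
    push_cast
    field_simp
    ring

end HypergeometricCoefficients

section Nonnegativity

lemma add_natCast_mul_add_natCast_nonneg {R : Type*} [Ring R] [PartialOrder R] [IsOrderedRing R]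
    {x y : R} (hx : -1 ≤ x) (hy : -1 ≤ y) (hxy : 0 ≤ x * y) (n : ℕ) :
    0 ≤ (x + n) * (y + n) := by
  cases n with
  | zero => simpa using hxy
  | succ k =>
    have hshift {t : R} (ht : -1 ≤ t) : 0 ≤ t + (k + 1 : ℕ) := by
      have ht' : 0 ≤ t + 1 := neg_le_iff_add_nonneg.1 ht
      simpa [add_assoc, add_comm, add_left_comm] using add_nonneg ht' k.cast_nonneg
    exact mul_nonneg (hshift hx) (hshift hy)

variable {R : Type*} [CommRing R] [PartialOrder R] {a b c : R}

lemma ascPochhammer_eval_mul_eval_nonneg [IsOrderedRing R]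
    (hab : ∀ n : ℕ, 0 ≤ (a + n) * (b + n)) (n : ℕ) :
    0 ≤ (ascPochhammer R n).eval a * (ascPochhammer R n).eval b := by
  induction n with
  | zero => simp
  | succ n ih =>
    rw [ascPochhammer_succ_eval, ascPochhammer_succ_eval, mul_mul_mul_comm]
    exact mul_nonneg ih (hab n)

lemma sub_mul_sub_pos [IsStrictOrderedRing R] (hab : 0 ≤ a * b) (hc : 0 < c) (hs : a + b < c) :
    0 < (c - a) * (c - b) := by
  have hprod : 0 < c * (c - (a + b)) := mul_pos hc (sub_pos.2 hs)
  calc 0 < c * (c - (a + b)) + a * b := add_pos_of_pos_of_nonneg hprod hab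
    _ = (c - a) * (c - b) := by ring

end Nonnegativity

section GaussInequality

open Finset Filter Topology Bornology
open scoped ComplexOrder

variable {𝕂 : Type*} [Field 𝕂] [PartialOrder 𝕂] [IsStrictOrderedRing 𝕂] [PosMulReflectLT 𝕂]
  {a b c : 𝕂}

lemma ordinaryHypergeometricCoefficient_nonneg
    (hab : ∀ n, 0 ≤ (ascPochhammer 𝕂 n).eval a * (ascPochhammer 𝕂 n).eval b) (hc : 0 < c) (n : ℕ) :
    0 ≤ ordinaryHypergeometricCoefficient a b c n := by
  rw [ordinaryHypergeometricCoefficient, mul_assoc (_ : 𝕂)⁻¹]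
  exact mul_nonneg (mul_nonneg (inv_nonneg.2 (Nat.cast_nonneg _)) (hab n))
    (inv_nonneg.2 (ascPochhammer_pos n c hc).le)

lemma sum_ordinaryHypergeometricCoefficient_le_mul_add_one
    (hab : ∀ n, 0 ≤ (ascPochhammer 𝕂 n).eval a * (ascPochhammer 𝕂 n).eval b) (hc : 0 < c)
    (hs : a + b < c) (N : ℕ) :
    ∑ n ∈ range N, ordinaryHypergeometricCoefficient a b c n ≤
      (c - a) * (c - b) / (c * (c - a - b)) *
        ∑ n ∈ range N, ordinaryHypergeometricCoefficient a b (c + 1) n := by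
  have hs' : 0 < c - a - b := by rwa [sub_sub, sub_pos]
  have hcn (n : ℕ) : c + n ≠ 0 := (add_pos_of_pos_of_nonneg hc n.cast_nonneg).ne'
  have hrest : 0 ≤ c * (N * ordinaryHypergeometricCoefficient a b c N) :=
    mul_nonneg hc.le (mul_nonneg N.cast_nonneg (ordinaryHypergeometricCoefficient_nonneg hab hc N))
  rw [div_mul_eq_mul_div, le_div_iff₀' (mul_pos hc hs'),
    sum_ordinaryHypergeometricCoefficient_contiguous a b hcn]
  exact le_add_of_nonneg_right hrest

lemma sum_ordinaryHypergeometricCoefficient_le_prod_mul_add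
    (hab : ∀ n, 0 ≤ (ascPochhammer 𝕂 n).eval a * (ascPochhammer 𝕂 n).eval b) (hc : 0 < c)
    (hs : a + b < c) (N m : ℕ) :
    ∑ n ∈ range N, ordinaryHypergeometricCoefficient a b c n ≤
      (∏ k ∈ range m, (c - a + k) * (c - b + k) / ((c + k) * (c - a - b + k))) *
        ∑ n ∈ range N, ordinaryHypergeometricCoefficient a b (c + m) n := by
  have hck (k : ℕ) : 0 < c + k := add_pos_of_pos_of_nonneg hc k.cast_nonneg
  have hsk (k : ℕ) : a + b < c + k := hs.trans_le (le_add_of_nonneg_right k.cast_nonneg)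
  have hab1 : 0 ≤ a * b := by simpa using hab 1
  have hfactor (k : ℕ) : 0 ≤ (c - a + k) * (c - b + k) / ((c + k) * (c - a - b + k)) := by
    have hnum := sub_mul_sub_pos hab1 (hck k) (hsk k)
    have hden : 0 < c + k - (a + b) := sub_pos.2 (hsk k)
    convert (div_pos hnum (mul_pos (hck k) hden)).le using 2 <;> ring
  induction m with
  | zero => simp
  | succ m ih =>
    have hstep := sum_ordinaryHypergeometricCoefficient_le_mul_add_one hab (hck m) (hsk m) N
    rw [prod_range_succ, mul_assoc, Nat.cast_succ, ← add_assoc]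
    refine ih.trans (mul_le_mul_of_nonneg_left (hstep.trans_eq ?_)
      (prod_nonneg fun k _ => hfactor k))
    congr 2 <;> ring

lemma tendsto_ordinaryHypergeometricCoefficient_cobounded {𝕜 : Type*} [NormedField 𝕜] (a b : 𝕜)
    (n : ℕ) :
    Tendsto (fun c => ordinaryHypergeometricCoefficient a b c n) (cobounded 𝕜)
      (𝓝 (if n = 0 then 1 else 0)) := by
  induction n with
  | zero => simpa [ordinaryHypergeometricCoefficient_zero] using tendsto_const_nhds
  | succ n ih =>
    have hinv : Tendsto (fun c : 𝕜 => (c + n)⁻¹) (cobounded 𝕜) (𝓝 0) :=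
      tendsto_inv₀_cobounded.comp (tendsto_add_const_cobounded (n : 𝕜))
    simpa [ordinaryHypergeometricCoefficient_succ] using ih.mul (hinv.const_mul _)

lemma tendsto_sum_ordinaryHypergeometricCoefficient_cobounded {𝕜 : Type*} [NormedField 𝕜]
    (a b : 𝕜) {N : ℕ} (hN : 0 < N) :
    Tendsto (fun c => ∑ n ∈ range N, ordinaryHypergeometricCoefficient a b c n) (cobounded 𝕜)
      (𝓝 1) := by
  simpa [hN] using
    tendsto_finsetSum (range N) fun n _ => tendsto_ordinaryHypergeometricCoefficient_cobounded a b n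

lemma GammaSeq_mul_div_mul_eq_prod {x y z w : ℂ} (h : x + y = z + w) {m : ℕ} (hm : m ≠ 0) :
    Complex.GammaSeq x m * Complex.GammaSeq y m / (Complex.GammaSeq z m * Complex.GammaSeq w m) =
      ∏ k ∈ range (m + 1), (z + k) * (w + k) / ((x + k) * (y + k)) := by
  have hm' : (m : ℂ) ≠ 0 := Nat.cast_ne_zero.2 hm
  have hpow : (m : ℂ) ^ x * (m : ℂ) ^ y = (m : ℂ) ^ z * (m : ℂ) ^ w := by
    rw [← Complex.cpow_add _ _ hm', ← Complex.cpow_add _ _ hm', h]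
  have hne : (m : ℂ) ^ z * m.factorial * ((m : ℂ) ^ w * m.factorial) ≠ 0 := by
    simp [Complex.cpow_eq_zero_iff, hm', Nat.factorial_ne_zero]
  have hnum : (m : ℂ) ^ x * m.factorial * ((m : ℂ) ^ y * m.factorial) =
      (m : ℂ) ^ z * m.factorial * ((m : ℂ) ^ w * m.factorial) := by
    linear_combination (m.factorial : ℂ) ^ 2 * hpow
  simp only [Complex.GammaSeq, prod_div_distrib, prod_mul_distrib]
  rw [div_mul_div_comm, div_mul_div_comm, div_div_div_eq, hnum, mul_comm, mul_div_mul_right _ _ hne]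

lemma tendsto_prod_div_Gamma_mul_div_mul {x y z w : ℂ} (h : x + y = z + w)
    (hz : ∀ m : ℕ, z ≠ -m) (hw : ∀ m : ℕ, w ≠ -m) :
    Tendsto (fun m => ∏ k ∈ range m, (z + k) * (w + k) / ((x + k) * (y + k))) atTop
      (𝓝 (Complex.Gamma x * Complex.Gamma y / (Complex.Gamma z * Complex.Gamma w))) := by
  rw [← tendsto_add_atTop_iff_nat 1]
  have hne := mul_ne_zero (Complex.Gamma_ne_zero hz) (Complex.Gamma_ne_zero hw)
  refine (((Complex.GammaSeq_tendsto_Gamma x).mul (Complex.GammaSeq_tendsto_Gamma y)).div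
    ((Complex.GammaSeq_tendsto_Gamma z).mul (Complex.GammaSeq_tendsto_Gamma w)) hne).congr' ?_
  filter_upwards [eventually_ne_atTop 0] with m hm
  exact GammaSeq_mul_div_mul_eq_prod h hm

lemma sum_ordinaryHypergeometricCoefficient_le_Gamma {a b c : ℂ}
    (hab : ∀ n, 0 ≤ (ascPochhammer ℂ n).eval a * (ascPochhammer ℂ n).eval b) (hc : 0 < c)
    (hs : a + b < c) (N : ℕ) :
    ∑ n ∈ range N, ordinaryHypergeometricCoefficient a b c n ≤
      Complex.Gamma c * Complex.Gamma (c - a - b) /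
        (Complex.Gamma (c - a) * Complex.Gamma (c - b)) := by
  have hne (m : ℕ) : (c + m - a) * (c + m - b) ≠ 0 :=
    (sub_mul_sub_pos (by simpa using hab 1) (add_pos_of_pos_of_nonneg hc m.cast_nonneg)
      (hs.trans_le (le_add_of_nonneg_right m.cast_nonneg))).ne'
  have hca (m : ℕ) : c - a ≠ -m := fun h =>
    left_ne_zero_of_mul (hne m) (by linear_combination h)
  have hcb (m : ℕ) : c - b ≠ -m := fun h =>
    right_ne_zero_of_mul (hne m) (by linear_combination h)
  have hprod := tendsto_prod_div_Gamma_mul_div_mul (x := c) (y := c - a - b) (by ring) hca hcb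
  have hsum := (tendsto_sum_ordinaryHypergeometricCoefficient_cobounded a b N.succ_pos).comp
    ((tendsto_const_add_cobounded c).comp tendsto_natCast_atTop_cobounded)
  have hlim := hprod.mul hsum
  rw [mul_one] at hlim
  calc ∑ n ∈ range N, ordinaryHypergeometricCoefficient a b c n
      ≤ ∑ n ∈ range (N + 1), ordinaryHypergeometricCoefficient a b c n := by
        rw [sum_range_succ]
        exact le_add_of_nonneg_right (ordinaryHypergeometricCoefficient_nonneg hab hc N)
    _ ≤ _ := ge_of_tendsto' hlim
        (sum_ordinaryHypergeometricCoefficient_le_prod_mul_add hab hc hs (N + 1))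

end GaussInequality

section StarlikenessCriterion

lemma abs_im_lt_re_of_norm_sub_one_sq_lt {z : ℂ} (hz : ‖z - 1‖ ^ 2 < 1 / 2) : |z.im| < z.re := by
  rw [Complex.sq_norm, Complex.normSq_apply, sub_re, sub_im, one_re, one_im, sub_zero] at hz
  have hre : 0 < z.re := by nlinarith [mul_self_nonneg z.im, mul_self_nonneg z.re]
  exact abs_lt_of_sq_lt_sq (by nlinarith [mul_self_nonneg (2 * z.re - 1)]) hre.le

lemma re_div_pos_of_abs_im_lt_re {z w : ℂ} (hz : |z.im| < z.re) (hw : |w.im| < w.re) :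
    0 < (z / w).re := by
  have hw0 : w ≠ 0 := by
    rintro rfl
    simp at hw
  have him : |z.im * w.im| < z.re * w.re := by
    rw [abs_mul]
    exact mul_lt_mul'' hz hw (abs_nonneg _) (abs_nonneg _)
  rw [Complex.div_re, ← add_div]
  exact div_pos (by linarith [neg_abs_le (z.im * w.im)]) (Complex.normSq_pos.2 hw0)

lemma re_div_pos_of_norm_sub_le {u v w : ℂ} {r : ℝ} (hr : r ^ 2 < 1 / 2) (hw : w ≠ 0)
    (hu : ‖u - w‖ ≤ r * ‖w‖) (hv : ‖v - w‖ ≤ r * ‖w‖) : 0 < (u / v).re := by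
  have hsector {x : ℂ} (hx : ‖x - w‖ ≤ r * ‖w‖) : |(x / w).im| < (x / w).re := by
    have hdist : ‖x / w - 1‖ ≤ r := by
      rwa [div_sub_one hw, norm_div, div_le_iff₀ (norm_pos_iff.2 hw)]
    exact abs_im_lt_re_of_norm_sub_one_sq_lt
      ((pow_le_pow_left₀ (norm_nonneg _) hdist 2).trans_lt hr)
  rw [← div_div_div_cancel_right₀ hw u v]
  exact re_div_pos_of_abs_im_lt_re (hsector hu) (hsector hv)

lemma uniformlyStarlikeOnDisk_of_norm_deriv_le {g g' : ℂ → ℂ} {r : ℝ} (hr : r ^ 2 < 1 / 2)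
    (hg0 : g 0 = 0) (hg : ∀ z ∈ ball (0 : ℂ) 1, HasDerivAt g (g' z) z)
    (hg' : ∀ z ∈ ball (0 : ℂ) 1, ‖g' z‖ ≤ r) :
    UniformlyStarlikeOnDisk (fun z => z) g := by
  have hpos : ∀ z ∈ ball (0 : ℂ) 1, ∀ ζ ∈ ball (0 : ℂ) 1, z ≠ ζ →
      0 < (((z + conj (g z)) - (ζ + conj (g ζ))) / ((z - ζ) - conj (z - ζ) * conj (g' z))).re := by
    intro z hz ζ hζ hne
    refine re_div_pos_of_norm_sub_le hr (sub_ne_zero.2 hne) ?_ ?_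
    · have hlip : ‖g z - g ζ‖ ≤ r * ‖z - ζ‖ :=
        (convex_ball (0 : ℂ) 1).norm_image_sub_le_of_norm_hasDerivWithin_le
          (fun x hx => (hg x hx).hasDerivWithinAt) hg' hζ hz
      calc ‖(z + conj (g z)) - (ζ + conj (g ζ)) - (z - ζ)‖
          = ‖conj (g z - g ζ)‖ := by rw [map_sub]; congr 1; ring
        _ ≤ r * ‖z - ζ‖ := by rwa [Complex.norm_conj]
    · rw [sub_sub_cancel_left, norm_neg, norm_mul, Complex.norm_conj, Complex.norm_conj, mul_comm]
      exact mul_le_mul_of_nonneg_right (hg' z hz) (norm_nonneg _)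
  refine ⟨by simp [hg0], fun z hz => ?_, fun z hz ζ hζ hne => ?_, fun z hz hne => ?_⟩
  · rw [(hg z hz).deriv, deriv_id'', norm_one]
    nlinarith [hg' z hz, norm_nonneg (g' z)]
  · simpa [(hg z hz).deriv] using (hpos z hz ζ hζ hne).le
  · simpa [(hg z hz).deriv, hg0] using hpos z hz 0 (mem_ball_self one_pos) hne

lemma norm_mul_natCast_add_one_mul_pow_le {𝕜 : Type*} [RCLike 𝕜] (t : 𝕜) {z : 𝕜} (hz : ‖z‖ ≤ 1)
    (n : ℕ) : ‖t * ((n + 1) * z ^ n)‖ ≤ (n + 1) * ‖t‖ := by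
  have hcast : ‖(n + 1 : 𝕜)‖ = n + 1 := by exact_mod_cast RCLike.norm_natCast (K := 𝕜) (n + 1)
  rw [norm_mul, norm_mul, norm_pow, hcast, mul_comm]
  have hpow : (n + 1 : ℝ) * ‖z‖ ^ n ≤ n + 1 :=
    mul_le_of_le_one_right (by positivity) (pow_le_one₀ (norm_nonneg z) hz)
  exact mul_le_mul_of_nonneg_right hpow (norm_nonneg t)

lemma hasDerivAt_tsum_mul_pow_succ {𝕜 : Type*} [RCLike 𝕜] {t : ℕ → 𝕜}
    (ht : Summable fun n : ℕ => (n + 1 : ℝ) * ‖t n‖) {z : 𝕜} (hz : z ∈ ball (0 : 𝕜) 1) :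
    HasDerivAt (fun z => ∑' n, t n * z ^ (n + 1)) (∑' n, t n * ((n + 1) * z ^ n)) z := by
  refine hasDerivAt_tsum_of_isPreconnected (g := fun n z => t n * z ^ (n + 1))
    (g' := fun n z => t n * ((n + 1) * z ^ n)) ht isOpen_ball
    (convex_ball (0 : 𝕜) 1).isPreconnected (fun n y _ => ?_)
    (fun n y hy => norm_mul_natCast_add_one_mul_pow_le (t n) (mem_ball_zero_iff.1 hy).le n)
    (mem_ball_self one_pos) ?_ hz
  · simpa using (hasDerivAt_pow (n + 1) y).const_mul (t n)
  · simp [summable_zero]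

lemma uniformlyStarlikeOnDisk_tsum_mul_pow_succ {t : ℕ → ℂ}
    (ht : Summable fun n : ℕ => (n + 1 : ℝ) * ‖t n‖)
    (hsum : (∑' n : ℕ, (n + 1 : ℝ) * ‖t n‖) ^ 2 < 1 / 2) :
    UniformlyStarlikeOnDisk (fun z => z) fun z => ∑' n, t n * z ^ (n + 1) :=
  uniformlyStarlikeOnDisk_of_norm_deriv_le hsum (by simp)
    (fun _ hz => hasDerivAt_tsum_mul_pow_succ ht hz) fun _ hz =>
      tsum_of_norm_bounded ht.hasSum fun n =>
        norm_mul_natCast_add_one_mul_pow_le (t n) (mem_ball_zero_iff.1 hz).le n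

end StarlikenessCriterion

section HypergeometricPrimitive

lemma mul_hypFPrim_eq_tsum_bc3 (a b c α z : ℂ) :
    α / 2 * hypFPrim a b c z = ∑' n, bc3 a b c α n * z ^ (n + 1) := by
  rw [hypFPrim, ← tsum_mul_left]
  refine tsum_congr fun n => ?_
  rw [bc3]
  ring

lemma add_one_mul_norm_bc3 (a b c α : ℂ) (n : ℕ) :
    (n + 1 : ℝ) * ‖bc3 a b c α n‖ =
      ‖α‖ / 2 * ‖ordinaryHypergeometricCoefficient a b c n‖ := by
  have hn : (n + 1 : ℂ) ≠ 0 := Nat.cast_add_one_ne_zero n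
  have hcast : ‖(n + 1 : ℂ)‖ = n + 1 := by exact_mod_cast Complex.norm_natCast (n + 1)
  have hmul : (n + 1 : ℂ) * bc3 a b c α n = α / 2 * ordinaryHypergeometricCoefficient a b c n := by
    simp only [bc3, poch, ordinaryHypergeometricCoefficient]
    field_simp
  rw [← hcast, ← norm_mul, hmul, norm_mul, norm_div, Complex.norm_two]

open scoped ComplexOrder

theorem hypergeom_uniformly_starlike_c_general {a b : ℂ}
    (hab : ∀ n, 0 ≤ poch a n * poch b n) {c : ℝ} (hc : 0 < c) (hs : a + b < c) {α : ℂ}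
    (hQ : (‖α‖ : ℂ) * (Complex.Gamma (c : ℂ) * Complex.Gamma ((c : ℂ) - a - b)
      / (Complex.Gamma ((c : ℂ) - a) * Complex.Gamma ((c : ℂ) - b))) ≤ 1) :
    (Summable fun n : ℕ => (n + 1 : ℝ) * ‖bc3 a b (c : ℂ) α n‖) ∧
    (∑' n : ℕ, (n + 1 : ℝ) * ‖bc3 a b (c : ℂ) α n‖) ≤ 1 / 2 ∧
    UniformlyStarlikeOnDisk (fun z => z) (fun z => α / 2 * hypFPrim a b (c : ℂ) z) := by
  have hc' : (0 : ℂ) < c := by exact_mod_cast hc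
  have hpartial (N : ℕ) :
      ∑ n ∈ Finset.range N, (n + 1 : ℝ) * ‖bc3 a b (c : ℂ) α n‖ ≤ 1 / 2 := by
    simp only [add_one_mul_norm_bc3, ← Finset.mul_sum]
    have hα : (0 : ℂ) ≤ ‖α‖ := by exact_mod_cast norm_nonneg α
    have hle : (‖α‖ : ℂ) * (∑ n ∈ Finset.range N,
        ‖ordinaryHypergeometricCoefficient a b (c : ℂ) n‖ : ℝ) ≤ 1 := by
      push_cast
      simp only [Complex.norm_of_nonneg' (ordinaryHypergeometricCoefficient_nonneg hab hc' _)]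
      exact (mul_le_mul_of_nonneg_left
        (sum_ordinaryHypergeometricCoefficient_le_Gamma hab hc' hs N) hα).trans hQ
    have hle' : ‖α‖ * ∑ n ∈ Finset.range N,
        ‖ordinaryHypergeometricCoefficient a b (c : ℂ) n‖ ≤ 1 := by exact_mod_cast hle
    linarith
  have hnonneg (n : ℕ) : 0 ≤ (n + 1 : ℝ) * ‖bc3 a b (c : ℂ) α n‖ := by positivity
  have hsummable := summable_of_sum_range_le hnonneg hpartial
  have htsum := Real.tsum_le_of_sum_range_le hnonneg hpartial
  refine ⟨hsummable, htsum, ?_⟩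
  simp only [mul_hypFPrim_eq_tsum_bc3]
  exact uniformlyStarlikeOnDisk_tsum_mul_pow_succ hsummable
    ((pow_le_pow_left₀ (tsum_nonneg hnonneg) htsum 2).trans_lt (by norm_num))

end HypergeometricPrimitive

/-- Theorem 5(c): under the stated conditions on `a, b, c, α`, the
coefficients of `g₃(z) = (α/2) ∫₀ᶻ F(a,b;c;t) dt` satisfy `∑_{n≥1} n|bₙ| ≤ 1/2`;
consequently `f₃(z) = z + conj(g₃(z))` is uniformly starlike in `𝔻`. -/
theorem hypergeom_uniformly_starlike_c (a b : ℂ)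
    (hab : (∃ a' b' : ℝ, a = (a' : ℂ) ∧ b = (b' : ℂ) ∧ -1 < a' ∧ -1 < b' ∧ 0 < a' * b') ∨
           (a ≠ 0 ∧ b ≠ 0 ∧ b = conj a))
    (c : ℝ) (hc : 0 < c) (hc1 : (a + b).re < c)
    (α : ℂ) (hα : ‖α‖ < 1)
    (hQ : ∃ q : ℝ, 0 < q ∧ q ≤ 1 ∧
      (q : ℂ) = (‖α‖ : ℂ) * (Complex.Gamma (c : ℂ) * Complex.Gamma ((c : ℂ) - a - b)
          / (Complex.Gamma ((c : ℂ) - a) * Complex.Gamma ((c : ℂ) - b)))) :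
    (Summable fun n : ℕ => ((n + 1 : ℝ)) * ‖bc3 a b (c : ℂ) α n‖) ∧
    (∑' n : ℕ, ((n + 1 : ℝ)) * ‖bc3 a b (c : ℂ) α n‖) ≤ 1 / 2 ∧
    UniformlyStarlikeOnDisk (fun z => z)
      (fun z => α / 2 * hypFPrim a b (c : ℂ) z) := by
  obtain ⟨q, -, hq1, hq⟩ := hQ
  open scoped ComplexOrder in
  have hQ' := hq.ge.trans (by exact_mod_cast hq1 : (q : ℂ) ≤ 1)
  rcases hab with ⟨x, y, rfl, rfl, hx, hy, hxy⟩ | ⟨-, -, rfl⟩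
  · refine hypergeom_uniformly_starlike_c_general (ascPochhammer_eval_mul_eval_nonneg fun n => ?_)
      hc (Complex.lt_def.2 ⟨hc1, by simp⟩) hQ'
    exact_mod_cast add_natCast_mul_add_natCast_nonneg hx.le hy.le hxy.le n
  · refine hypergeom_uniformly_starlike_c_general (ascPochhammer_eval_mul_eval_nonneg fun n => ?_)
      hc (Complex.lt_def.2 ⟨hc1, by simp⟩) hQ'
    simpa using mul_star_self_nonneg (a + n)
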